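/- Mix axiom for relativized common knowledge: for every epistemic model M, every group of agents G ⊆ A, every world w, and all formulas φ, ψ, it holds that M,w ⊨ C_G(ψ | φ) ↔ E_G(ψ → (φ ∧ C_G(ψ | φ))). -/

import Mathlib

/-- Syntax of public announcement logic with relativized common knowledge.
`Agent` is the set of agents, `AtomP` the set of atomic propositions. -/
inductive Form (Agent AtomP : Type) : Type
  | top  : Form Agent AtomP
  | atom : AtomP → Form Agent AtomP
  | neg  : Form Agent AtomP → Form Agent AtomP
  | or   : Form Agent AtomP → Form Agent AtomP → Form Agent AtomP
  | know : Agent → Form Agent AtomP → Form Agent AtomP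
  | ev   : Set Agent → Form Agent AtomP → Form Agent AtomP
  | ck   : Set Agent → Form Agent AtomP → Form Agent AtomP → Form Agent AtomP
  | ann  : Form Agent AtomP → Form Agent AtomP → Form Agent AtomP

namespace Form
variable {Agent AtomP : Type}
/-- φ ∧ ψ -/
def and (φ ψ : Form Agent AtomP) : Form Agent AtomP := .neg (.or (.neg φ) (.neg ψ))
/-- φ → ψ -/
def imp (φ ψ : Form Agent AtomP) : Form Agent AtomP := .or (.neg φ) ψ
/-- φ ↔ ψ -/
def iff (φ ψ : Form Agent AtomP) : Form Agent AtomP := (φ.imp ψ).and (ψ.imp φ)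
end Form

/-- Truth of a PAL formula at world `w` of the epistemic model given by the set of
worlds `W`, accessibility relations `R` and valuation `V`.  A public announcement
`[!φ]ψ` is evaluated in the updated model whose worlds are the subtype of worlds
satisfying `φ`, with accessibility relations and valuation restricted accordingly. -/
def Sat {Agent AtomP : Type} :
    Form Agent AtomP → (W : Type) → (Agent → W → W → Prop) → (AtomP → Set W) → W → Prop
  | .top, _, _, _, _ => True
  | .atom p, _, _, V, w => w ∈ V p
  | .neg φ, W, R, V, w => ¬ Sat φ W R V w
  | .or φ ψ, W, R, V, w => Sat φ W R V w ∨ Sat ψ W R V w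
  | .know i φ, W, R, V, w => ∀ v, R i w v → Sat φ W R V v
  | .ev G φ, W, R, V, w => ∀ v, (∃ i ∈ G, R i w v) → Sat φ W R V v
  | .ck G φ ψ, W, R, V, w =>
      ∀ v, Relation.TransGen (fun u u' => (∃ i ∈ G, R i u u') ∧ Sat φ W R V u') w v →
        Sat ψ W R V v
  | .ann φ ψ, W, R, V, w =>
      ∀ h : Sat φ W R V w,
        Sat ψ {v : W // Sat φ W R V v} (fun i x y => R i x.1 y.1)
          (fun p => {x : {v : W // Sat φ W R V v} | x.1 ∈ V p}) ⟨w, h⟩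

/-- A formula is valid iff it is true at every world of every epistemic model. -/
def Valid {Agent AtomP : Type} (φ : Form Agent AtomP) : Prop :=
  ∀ (W : Type), Nonempty W → ∀ (R : Agent → W → W → Prop) (V : AtomP → Set W) (w : W),
    Sat φ W R V w

section TransGen
variable {α : Type*} {r : α → α → Prop} {p : α → Prop} {a : α}

open Relation (ReflTransGen TransGen)

theorem forall_transGen_iff :
    (∀ c, TransGen r a c → p c) ↔ ∀ b, r a b → p b ∧ ∀ c, TransGen r b c → p c :=
  calc (∀ c, TransGen r a c → p c)
    _ ↔ ∀ b, r a b → ∀ c, ReflTransGen r b c → p c :=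
      ⟨fun h b hab c hbc => h c (.head' hab hbc), fun h c hac =>
        have ⟨b, hab, hbc⟩ := TransGen.head'_iff.1 hac
        h b hab c hbc⟩
    _ ↔ ∀ b, r a b → p b ∧ ∀ c, TransGen r b c → p c := by
      simp only [Relation.reflTransGen_iff_eq_or_transGen, or_imp, forall_and, forall_eq]

end TransGen

section Semantics
variable {Agent AtomP W : Type}

/-- The relation `R_G`: the union of the accessibility relations of the agents in `G`. -/
def groupRel (R : Agent → W → W → Prop) (G : Set Agent) (u v : W) : Prop :=
  ∃ i ∈ G, R i u v

/-- The relation `R_G^φ`, whose transitive closure interprets `C_G(· | φ)`.  Only the target of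
a step has to satisfy `φ`. -/
def relativizedGroupRel (R : Agent → W → W → Prop) (V : AtomP → Set W) (G : Set Agent)
    (φ : Form Agent AtomP) (u v : W) : Prop :=
  groupRel R G u v ∧ Sat φ W R V v

variable {R : Agent → W → W → Prop} {V : AtomP → Set W} {w : W} {G : Set Agent}
  {φ ψ : Form Agent AtomP}

theorem sat_and : Sat (φ.and ψ) W R V w ↔ Sat φ W R V w ∧ Sat ψ W R V w := by
  simp only [Form.and, Sat, not_or, not_not]

theorem sat_imp : Sat (φ.imp ψ) W R V w ↔ (Sat φ W R V w → Sat ψ W R V w) :=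
  imp_iff_not_or.symm

theorem sat_iff : Sat (φ.iff ψ) W R V w ↔ (Sat φ W R V w ↔ Sat ψ W R V w) := by
  simp only [Form.iff, sat_and, sat_imp, iff_iff_implies_and_implies]

theorem sat_ev : Sat (.ev G φ) W R V w ↔ ∀ v, groupRel R G w v → Sat φ W R V v :=
  Iff.rfl

theorem sat_ck :
    Sat (.ck G ψ φ) W R V w ↔
      ∀ v, Relation.TransGen (relativizedGroupRel R V G ψ) w v → Sat φ W R V v :=
  Iff.rfl

theorem sat_ck_iff_forall_relativizedGroupRel :
    Sat (.ck G ψ φ) W R V w ↔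
      ∀ v, relativizedGroupRel R V G ψ w v → Sat φ W R V v ∧ Sat (.ck G ψ φ) W R V v := by
  simpa only [sat_ck] using forall_transGen_iff

end Semantics

/-- Mix axiom for relativized common knowledge:
`M,w ⊨ C_G(ψ | φ) ↔ E_G(ψ → (φ ∧ C_G(ψ | φ)))`.
Here `Form.ck G ψ φ` denotes `C_G(ψ | φ)` and `Form.ev G` is mutual knowledge `E_G`. -/
theorem ckMix {Agent AtomP : Type} (W : Type) (hW : Nonempty W)
    (R : Agent → W → W → Prop) (V : AtomP → Set W) (G : Set Agent) (w : W)
    (φ ψ : Form Agent AtomP) :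
    Sat ((Form.ck G ψ φ).iff (Form.ev G (ψ.imp (φ.and (Form.ck G ψ φ))))) W R V w := by
  rw [sat_iff, sat_ck_iff_forall_relativizedGroupRel]
  simp only [relativizedGroupRel, and_imp, sat_ev, sat_imp, sat_and]
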